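/- arXiv:1004.0046 — 4 statements merged into one kernel-verified Lean document; each statement's English description precedes it below -/
import Mathlib

section
/- There exist no rational numbers a, b, t satisfying simultaneously: 3 = 9a²t² + 108abt + 756b², −3 = 54at + 756b, and t²/36 = 9at² + 54bt. -/
/-- There are no rational numbers `a, b, t` satisfying simultaneously
`3 = 9a²t² + 108abt + 756b²`, `−3 = 54at + 756b`, and `t²/36 = 9at² + 54bt`. -/
theorem stmt_4 :
    ¬ ∃ a b t : ℚ,
      3 = 9 * a ^ 2 * t ^ 2 + 108 * a * b * t + 756 * b ^ 2 ∧
      -3 = 54 * a * t + 756 * b ∧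
      t ^ 2 / 36 = 9 * a * t ^ 2 + 54 * b * t := by
  rintro ⟨a, b, t, h1, h2, -⟩
  have hs : a * t = -1 / 18 - 14 * b := by linarith
  -- Eliminating `a * t` leaves a quadratic in `b` whose discriminant is `753 = 3 * 251`
  -- up to a rational square.
  have hb : (504 * b + 2) ^ 2 = 753 := by
    have h3 : 3 = 9 * (a * t) ^ 2 + 108 * (a * t) * b + 756 * b ^ 2 := by
      rw [h1]; ring
    rw [hs] at h3
    linarith
  have hsq : IsSquare ((753 : ℕ) : ℚ) := ⟨504 * b + 2, by push_cast; rw [← hb]; ring⟩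
  rw [Rat.isSquare_natCast_iff] at hsq
  obtain ⟨n, hn⟩ := hsq
  have hlt : n < 28 := by nlinarith
  interval_cases n <;> omega
end

section
/- For every integer t, if 2⁴·3⁵ = 3888 divides 49t² + 756t − 976860 (where 976860 = 2²·3⁶·5·67), then t ≡ 2 (mod 4) and 27 divides t. -/
/-- For every integer `t`, if `2⁴·3⁵ = 3888` divides `49t² + 756t − 976860`, then
`t ≡ 2 (mod 4)` and `27 ∣ t`. -/
theorem stmt_8 (t : ℤ) (h : (3888 : ℤ) ∣ 49 * t ^ 2 + 756 * t - 976860) :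
    t ≡ 2 [ZMOD 4] ∧ (27 : ℤ) ∣ t := by
  obtain ⟨k, hk⟩ := h
  constructor
  · -- `t` is even, and for `t = 2s` the quotient by 4 is `(s + 1)²` modulo 4, so `s` is odd.
    have h2 : (2 : ℤ) ∣ t := Int.prime_two.dvd_of_dvd_pow (n := 2) (by omega)
    obtain ⟨s, rfl⟩ := h2
    have hs : (2 : ℤ) ∣ s + 1 := by
      refine Int.prime_two.dvd_of_dvd_pow (n := 2) ?_
      ring_nf at hk ⊢
      omega
    unfold Int.ModEq
    omega
  · -- Since `27 ∣ 756` and `3⁶ ∣ 976860`, only the term `49t²` matters at each of the three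
    -- successive divisions by 3, modulo 3, 27 and 243 respectively.
    have h3 : (3 : ℤ) ∣ t := Int.prime_three.dvd_of_dvd_pow (n := 2) (by omega)
    obtain ⟨u, rfl⟩ := h3
    have hu : (3 : ℤ) ∣ u := by
      refine Int.prime_three.dvd_of_dvd_pow (n := 2) ?_
      ring_nf at hk ⊢
      omega
    obtain ⟨v, rfl⟩ := hu
    have hv : (3 : ℤ) ∣ v := by
      refine Int.prime_three.dvd_of_dvd_pow (n := 2) ?_
      ring_nf at hk ⊢
      omega
    omega
end

section
/- Let q be an odd prime power, V a four-dimensional vector space over the finite field F_q equipped with a nondegenerate alternating bilinear form B, and Λ ⊆ V a subset with exactly q² elements. Suppose that for every two-dimensional linear subspace W ⊆ V on which B does not vanish identically, the function V → ℤ/qℤ, τ ↦ #(Λ ∩ (W + τ)) (mod q), is constant. Then Λ is a coset of some two-dimensional linear subspace of V, i.e. there exist a two-dimensional subspace W₀ ⊆ V and v ∈ V with Λ = v + W₀. -/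
/-!
Write `q = |F|`. Let `W` be a non-isotropic plane. There are `q²` cosets of `W` and `q²` points
of `Λ`, so either every coset contains exactly one point of `Λ`, or some coset misses `Λ`; in the
latter case the constancy hypothesis says that every coset meets `Λ` in a multiple of `q` points.
Hence, if some nonzero difference `d` of two points of `Λ` lies in `W`, a coset `x + W` with
`x ∈ Λ` contains at least `q` points of `Λ` (`card_le_ncard_inter`).

Fix such a `d` and `x ∈ Λ`, and suppose that the line `x + ⟨d⟩` is not contained in `Λ`. Then for
each `w` with `B d w = 1` the plane `x + ⟨d, w⟩` contains a point of `Λ` off the line `x + ⟨d⟩`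
(`exists_off_line`). Such a point recovers `w` modulo `⟨d⟩`, so there are at most `(q² - 1) q`
such `w`; but they form an affine hyperplane, which has `q³` points. So `Λ` contains the line
through each of its points in each direction determined by two of its points (`line_subset`), and
therefore it is a coset of a linear subspace, of dimension two since `|Λ| = q²`.
-/

section

variable {F V : Type*} [Field F] [Fintype F] [AddCommGroup V] [Module F V]
  [FiniteDimensional F V]

lemma card_le_ncard_inter (hV : Module.finrank F V = 4)
    (Λ : Set V) (hΛ : Λ.ncard = Fintype.card F ^ 2)
    (W : Submodule F V) (hW : Module.finrank F W = 2)
    (hc : ∀ τ₁ τ₂ : V,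
        ((Λ ∩ {v | v - τ₁ ∈ W}).ncard : ZMod (Fintype.card F)) =
        ((Λ ∩ {v | v - τ₂ ∈ W}).ncard : ZMod (Fintype.card F)))
    {d x₀ x : V} (hd : d ≠ 0) (hdW : d ∈ W) (hx₀ : x₀ ∈ Λ) (hx₀d : x₀ + d ∈ Λ) (hx : x ∈ Λ) :
    Fintype.card F ≤ (Λ ∩ {v | v - x ∈ W}).ncard := by
  have : Finite V := Module.finite_of_finite F
  have hcardQ : Nat.card (V ⧸ W) = Nat.card Λ := by
    have h := Submodule.finrank_quotient_add_finrank W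
    have h2 : Module.finrank F (V ⧸ W) = 2 := by omega
    rw [Module.natCard_eq_pow_finrank (K := F), h2, Nat.card_coe_set_eq, hΛ,
      Nat.card_eq_fintype_card]
  let f : Λ → V ⧸ W := fun y => W.mkQ y
  -- By equality of cardinalities, a surjective `f` would be injective, but `f` identifies
  -- `x₀` and `x₀ + d`.
  have hns : ¬ Function.Surjective f := by
    intro hs
    have hb : Function.Bijective f :=
      (Nat.bijective_iff_surjective_and_card f).2 ⟨hs, hcardQ.symm⟩
    have h : (⟨x₀ + d, hx₀d⟩ : Λ) = ⟨x₀, hx₀⟩ := by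
      apply hb.1
      simp [f, hdW]
    exact hd (by simpa using congrArg Subtype.val h)
  have hex : ∃ τ : V, Λ ∩ {v | v - τ ∈ W} = ∅ := by
    by_contra! hne
    apply hns
    intro c
    obtain ⟨τ, rfl⟩ := W.mkQ_surjective c
    obtain ⟨y, hy, hyW⟩ := hne τ
    exact ⟨⟨y, hy⟩, (Submodule.Quotient.eq W).2 hyW⟩
  obtain ⟨τ, hτ⟩ := hex
  have h0 := hc x τ
  rw [hτ, Set.ncard_empty, Nat.cast_zero, ZMod.natCast_eq_zero_iff] at h0
  refine Nat.le_of_dvd ?_ h0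
  rw [Set.ncard_pos (Set.toFinite _)]
  exact ⟨x, hx, by simp⟩

lemma exists_off_line (hV : Module.finrank F V = 4)
    (B : LinearMap.BilinForm F V) (halt : ∀ v : V, B v v = 0)
    (Λ : Set V) (hΛ : Λ.ncard = Fintype.card F ^ 2)
    (hconst : ∀ W : Submodule F V, Module.finrank F W = 2 →
      (∃ x ∈ W, ∃ y ∈ W, B x y ≠ 0) →
      ∀ τ₁ τ₂ : V,
        ((Λ ∩ {v | v - τ₁ ∈ W}).ncard : ZMod (Fintype.card F)) =
        ((Λ ∩ {v | v - τ₂ ∈ W}).ncard : ZMod (Fintype.card F)))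
    {d x₀ x w : V} (hd : d ≠ 0) (hx₀ : x₀ ∈ Λ) (hx₀d : x₀ + d ∈ Λ) (hx : x ∈ Λ)
    {t : F} (ht : x + t • d ∉ Λ) (hw : B d w = 1) :
    ∃ y ∈ Λ, ∃ a b : F, b ≠ 0 ∧ y = x + (a • d + b • w) := by
  have : Finite V := Module.finite_of_finite F
  let W : Submodule F V := Submodule.span F {d, w}
  have hli : LinearIndependent F ![d, w] := by
    rw [LinearIndependent.pair_iff' hd]
    intro a h
    rw [← h] at hw
    simp [halt] at hw
  have hW : Module.finrank F W = 2 := by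
    have h := finrank_span_eq_card hli
    rwa [Matrix.range_cons_cons_empty, Fintype.card_fin] at h
  have hdW : d ∈ W := Submodule.subset_span (by simp)
  have hwW : w ∈ W := Submodule.subset_span (by simp)
  have hle := card_le_ncard_inter hV Λ hΛ W hW
    (hconst W hW ⟨d, hdW, w, hwW, by simp [hw]⟩) hd hdW hx₀ hx₀d hx
  by_contra! hno
  -- Otherwise `Λ ∩ (x + W)` lies in the line, without the point `x + t • d`.
  have hsub : Λ ∩ {v | v - x ∈ W} ⊆ (fun a : F => x + a • d) '' {t}ᶜ := by
    rintro y ⟨hy, hyW⟩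
    obtain ⟨a, b, hab⟩ := Submodule.mem_span_pair.1 hyW
    have hyx : y = x + (a • d + b • w) := by rw [hab]; abel
    by_cases hb : b = 0
    · subst hb
      refine ⟨a, ?_, by simp [hyx]⟩
      rintro rfl
      exact ht (by simpa [hyx] using hy)
    · exact absurd hyx (hno y hy a b hb)
  have h1 := Set.ncard_le_ncard hsub (Set.toFinite _)
  have h2 := Set.ncard_image_le (f := fun a : F => x + a • d) (Set.toFinite ({t}ᶜ : Set F))
  have h3 := Set.ncard_add_ncard_compl ({t} : Set F)
  rw [Set.ncard_singleton, Nat.card_eq_fintype_card] at h3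
  omega

lemma line_subset (hV : Module.finrank F V = 4)
    (B : LinearMap.BilinForm F V) (halt : ∀ v : V, B v v = 0) (hnd : B.Nondegenerate)
    (Λ : Set V) (hΛ : Λ.ncard = Fintype.card F ^ 2)
    (hconst : ∀ W : Submodule F V, Module.finrank F W = 2 →
      (∃ x ∈ W, ∃ y ∈ W, B x y ≠ 0) →
      ∀ τ₁ τ₂ : V,
        ((Λ ∩ {v | v - τ₁ ∈ W}).ncard : ZMod (Fintype.card F)) =
        ((Λ ∩ {v | v - τ₂ ∈ W}).ncard : ZMod (Fintype.card F)))
    {d x₀ x : V} (hx₀ : x₀ ∈ Λ) (hx₀d : x₀ + d ∈ Λ) (hx : x ∈ Λ) (t : F) :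
    x + t • d ∈ Λ := by
  have : Finite V := Module.finite_of_finite F
  by_cases hd : d = 0
  · simpa [hd] using hx
  by_contra ht
  have hBd : B d ≠ 0 := by
    intro h
    exact hd (hnd.1 d fun y => by simp [h])
  obtain ⟨w₀, hw₀⟩ : ∃ w, B d w = 1 := LinearMap.surjective hBd 1
  -- The hyperplane `B d w = 1`, translated by `-w₀` to the linear hyperplane `ker (B d)`.
  have hsub : (LinearMap.ker (B d) : Set V) ⊆
      (fun p : V × F => (B d (p.1 - x))⁻¹ • (p.1 - x) + p.2 • d - w₀) ''
        ((Λ \ {x}) ×ˢ Set.univ) := by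
    intro k hk
    have hk' : B d k = 0 := hk
    obtain ⟨y, hy, a, b, hb, hyx⟩ := exists_off_line hV B halt Λ hΛ hconst hd hx₀ hx₀d hx ht
      (w := k + w₀) (by simp [hk', hw₀])
    have hyx' : y - x = a • d + b • (k + w₀) := by rw [hyx]; abel
    have hB : B d (y - x) = b := by
      rw [hyx']; simp [halt, hk', hw₀]
    refine ⟨(y, -(b⁻¹ * a)), ⟨⟨hy, ?_⟩, trivial⟩, ?_⟩
    · rintro rfl
      simp at hB
      exact hb hB.symm
    · simp only [hB]
      rw [hyx', smul_add, smul_smul, smul_smul, inv_mul_cancel₀ hb, one_smul, neg_smul]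
      abel
  have hker : (LinearMap.ker (B d) : Set V).ncard = Fintype.card F ^ 3 := by
    have h := LinearMap.finrank_range_add_finrank_ker (B d)
    rw [LinearMap.range_eq_top.2 (LinearMap.surjective hBd), finrank_top, Module.finrank_self] at h
    have h3 : Module.finrank F (LinearMap.ker (B d)) = 3 := by omega
    rw [← Nat.card_coe_set_eq]
    have h4 := Module.natCard_eq_pow_finrank (K := F) (V := LinearMap.ker (B d))
    rw [h3, Nat.card_eq_fintype_card (α := F)] at h4
    exact h4
  have h1 := (Set.ncard_le_ncard hsub (Set.toFinite _)).trans (Set.ncard_image_le (Set.toFinite _))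
  rw [hker, Set.ncard_prod, Set.ncard_univ, Nat.card_eq_fintype_card,
    Set.ncard_sdiff_singleton_of_mem hx, hΛ, pow_succ] at h1
  have hq : 0 < Fintype.card F := Fintype.card_pos
  have h2 := Nat.le_of_mul_le_mul_right h1 hq
  have h3 : 0 < Fintype.card F ^ 2 := by positivity
  omega

end

/-- Let `q` be an odd prime power (`q = |F|` for a finite field `F`), `V` a four-dimensional
`F`-vector space with a nondegenerate alternating bilinear form `B`, and `Λ ⊆ V` a subset
with exactly `q²` elements. If for every two-dimensional subspace `W ⊆ V` on which `B` does
not vanish identically, the function `τ ↦ #(Λ ∩ (W + τ)) (mod q)` is constant, then `Λ` is a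
coset of a two-dimensional linear subspace of `V`. -/
theorem stmt_12 {F V : Type*} [Field F] [Fintype F]
    [AddCommGroup V] [Module F V] [FiniteDimensional F V]
    (hq : Odd (Fintype.card F))
    (hV : Module.finrank F V = 4)
    (B : LinearMap.BilinForm F V)
    (halt : ∀ v : V, B v v = 0)
    (hnd : B.Nondegenerate)
    (Λ : Set V) (hΛ : Λ.ncard = Fintype.card F ^ 2)
    (hconst : ∀ W : Submodule F V, Module.finrank F W = 2 →
      (∃ x ∈ W, ∃ y ∈ W, B x y ≠ 0) →
      ∀ τ₁ τ₂ : V,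
        ((Λ ∩ {v | v - τ₁ ∈ W}).ncard : ZMod (Fintype.card F)) =
        ((Λ ∩ {v | v - τ₂ ∈ W}).ncard : ZMod (Fintype.card F))) :
    ∃ W₀ : Submodule F V, Module.finrank F W₀ = 2 ∧
      ∃ v : V, Λ = {x : V | x - v ∈ W₀} := by
  have : Finite V := Module.finite_of_finite F
  have hq0 : 0 < Fintype.card F := Fintype.card_pos
  have hline := @line_subset F V _ _ _ _ _ hV B halt hnd Λ hΛ hconst
  obtain ⟨v, hv⟩ : Λ.Nonempty := by
    rw [← Set.ncard_pos (Set.toFinite _), hΛ]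
    positivity
  let W₀ : Submodule F V :=
    { carrier := {s | v + s ∈ Λ}
      add_mem' := by
        intro a b ha hb
        have h := hline hv hb ha 1
        rw [one_smul, add_assoc] at h
        exact h
      zero_mem' := by simpa using hv
      smul_mem' := fun c s hs => hline hv hs hv c }
  have hΛW : Λ = {x : V | x - v ∈ W₀} := by
    ext x
    change x ∈ Λ ↔ v + (x - v) ∈ Λ
    simp
  refine ⟨W₀, ?_, v, hΛW⟩
  have hcard : (W₀ : Set V).ncard = Fintype.card F ^ 2 := by
    have himg : (fun s => v + s) '' (W₀ : Set V) = Λ := by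
      rw [hΛW]
      ext x
      simp [sub_eq_neg_add]
    rw [← hΛ, ← himg, Set.ncard_image_of_injective _ (add_right_injective v)]
  have h4 := Module.natCard_eq_pow_finrank (K := F) (V := W₀)
  rw [Nat.card_eq_fintype_card (α := F)] at h4
  have h5 : Nat.card W₀ = Fintype.card F ^ 2 := hcard
  rw [h5] at h4
  exact (Nat.pow_right_injective (Fintype.one_lt_card (α := F)) h4).symm
end

section
/- Let V = (ℤ/3ℤ)⁴ with standard basis e₁, e₂, e₃, e₄, and let S = {e₂, e₂+e₁, e₂−e₁, e₃, e₃+e₁, e₃−e₁, e₄, e₄+e₁, e₄−e₁} (a set of nine elements). Then: (1) for every τ ∈ V and every ε ∈ {+1, −1}, the cardinality of S ∩ {ε·x + τ : x ∈ S} is divisible by 3; and (2) S is not a coset of a two-dimensional subspace of V, i.e. there is no two-dimensional linear subspace W ⊆ V and v ∈ V with S = v + W. -/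
/-!
`S` is a union of three lines in direction `e₁`, so it is stable under translation by `e₁`. So is
`ε • S + τ`, since `ε • x + τ + e₁ = ε • (x + ε • e₁) + τ` when `ε² = 1`. Hence translation by `e₁`
acts on the intersection as a permutation of order dividing 3 without fixed points, and the
cardinality is divisible by 3 (`three_dvd_card_of_add_mem`).

A coset of a subspace is closed under `(x, y) ↦ y + (y - x)`, but `S` contains `e₂` and `e₃` and not
`2e₃ - e₂`.
-/

/-- A finite set stable under translation by a nonzero vector `d` is a disjoint union of lines in
direction `d`, each with three elements. -/
lemma three_dvd_card_of_add_mem (T : Finset (Fin 4 → ZMod 3)) (d : Fin 4 → ZMod 3) (hd : d ≠ 0)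
    (hT : ∀ x ∈ T, x + d ∈ T) : 3 ∣ T.card := by
  have h3 : d + d + d = 0 := by
    ext i
    exact (by decide : ∀ a : ZMod 3, a + a + a = 0) (d i)
  let f : Function.End T := fun x => ⟨x.1 + d, hT _ x.2⟩
  have hf : f ^ 3 ^ 1 = 1 := by
    funext x
    apply Subtype.ext
    change x.1 + d + d + d = x.1
    rw [add_assoc, add_assoc, ← add_assoc d d d, h3, add_zero]
  haveI : IsEmpty (Function.fixedPoints f) := by
    refine ⟨fun ⟨x, hx⟩ => hd ?_⟩
    have h : x.1 + d = x.1 := congrArg Subtype.val hx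
    simpa using h
  have h := Equiv.Perm.card_fixedPoints_modEq (p := 3) hf
  rw [Fintype.card_coe, Fintype.card_eq_zero] at h
  exact (Nat.modEq_zero_iff_dvd).1 h

/-- In `V = (ℤ/3ℤ)⁴` with standard basis `e₁, …, e₄`, the nine-element set
`S = {e₂, e₂±e₁, e₃, e₃±e₁, e₄, e₄±e₁}` satisfies: (1) for every `τ ∈ V` and `ε = ±1`, the
cardinality of `S ∩ {ε·x + τ : x ∈ S}` is divisible by 3; and (2) `S` is not a coset of a
two-dimensional subspace of `V`. -/
theorem stmt_15
    (e : Fin 4 → (Fin 4 → ZMod 3)) (he : ∀ i, e i = Pi.single i 1)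
    (S : Finset (Fin 4 → ZMod 3))
    (hS : S = {e 1, e 1 + e 0, e 1 - e 0, e 2, e 2 + e 0, e 2 - e 0,
               e 3, e 3 + e 0, e 3 - e 0}) :
    (∀ τ : Fin 4 → ZMod 3, ∀ ε : ZMod 3, (ε = 1 ∨ ε = -1) →
      3 ∣ (S ∩ S.image fun x => ε • x + τ).card) ∧
    ¬ ∃ W : Submodule (ZMod 3) (Fin 4 → ZMod 3), Module.finrank (ZMod 3) W = 2 ∧
      ∃ v : Fin 4 → ZMod 3, (S : Set (Fin 4 → ZMod 3)) = {x | x - v ∈ W} := by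
  obtain rfl : e = fun i => Pi.single i 1 := funext he
  have hd : (Pi.single 0 1 : Fin 4 → ZMod 3) ≠ 0 := by decide
  have hadd : ∀ ε : ZMod 3, ∀ x ∈ S, x + ε • (Pi.single 0 1 : Fin 4 → ZMod 3) ∈ S := by
    subst hS
    decide
  refine ⟨fun τ ε hε => three_dvd_card_of_add_mem _ (Pi.single 0 1) hd ?_, ?_⟩
  · intro x hx
    rw [Finset.mem_inter, Finset.mem_image] at hx ⊢
    obtain ⟨hxS, y, hy, rfl⟩ := hx
    refine ⟨by simpa using hadd 1 _ hxS, y + ε • Pi.single 0 1, hadd ε y hy, ?_⟩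
    have hεε : ε * ε = 1 := by rcases hε with rfl | rfl <;> decide
    rw [smul_add, smul_smul, hεε, one_smul]
    abel
  · rintro ⟨W, -, v, hW⟩
    have hmem : ∀ x, x ∈ S ↔ x - v ∈ W := fun x => by
      rw [← Finset.mem_coe, hW, Set.mem_setOf_eq]
    have h1 : (Pi.single 1 1 : Fin 4 → ZMod 3) ∈ S := by subst hS; decide
    have h2 : (Pi.single 2 1 : Fin 4 → ZMod 3) ∈ S := by subst hS; decide
    have h3 : (Pi.single 2 1 + (Pi.single 2 1 - Pi.single 1 1) : Fin 4 → ZMod 3) ∉ S := by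
      subst hS; decide
    refine h3 ((hmem _).2 ?_)
    have h := W.add_mem ((hmem _).1 h2) (W.sub_mem ((hmem _).1 h2) ((hmem _).1 h1))
    convert h using 1
    abel
end
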